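/- Let B ∈ GL_N(C((t))) be a matrix lying in both U⁻_M(F) t^{-ξ} GL_M(O) U⁻_{M,N}(F) L_{(λ,(θ,θ'))} GL_N(O) and D · U_N(F) · t^{(η,η')} · GL_N(O), where t^{-ξ} = diag(t^{-ξ_1},...,t^{-ξ_M},1,...,1). Then for every 1 ≤ i ≤ N-M-1: η'_{N-M-i} + ... + η'_{N-M-1} ≤ θ'_{N-M-i} + ... + θ'_{N-M-1}; for every 1 ≤ i ≤ M: (ξ_1+η_1) + ... + (ξ_i+η_i) ≥ (λ_1+θ_1) + ... + (λ_i+θ_i); and for every 0 ≤ i ≤ M: (ξ_1+η_1) + ... + (ξ_i+η_i) + η_{i+1} ≥ (λ_1+θ_1) + ... + (λ_i+θ_i) + θ_{i+1}. Equivalently (λ,(θ,θ')) ≥ (ξ,(η,η')) in the root order of GL(M|N). -/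

import Mathlib

/- Common setup: `F = ℂ((t))` the field of formal Laurent series, `O = ℂ[[t]]` its ring of
integers (elements with no negative coefficients), `tpow k = t^k`.  `InGLO A` says that the
square matrix `A` lies in `GL(O)`, i.e. both `A` and an inverse of `A` have entries in `O`. -/

noncomputable section

abbrev F : Type := LaurentSeries ℂ

/-- `t^k` for `k : ℤ`, where `t` is the uniformizer of `ℂ((t))`. -/
noncomputable def tpow (k : ℤ) : F := (HahnSeries.single (1 : ℤ) (1 : ℂ) : F) ^ k

/-- The ring of integers `O = ℂ[[t]] ⊆ ℂ((t))`. -/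
def Oint : Set F := {f : F | ∀ m : ℤ, m < 0 → f.coeff m = 0}

/-- `A ∈ GL_n(O)`. -/
def InGLO {n : ℕ} (A : Matrix (Fin n) (Fin n) F) : Prop :=
  ∃ B : Matrix (Fin n) (Fin n) F,
    (∀ i j, A i j ∈ Oint) ∧ (∀ i j, B i j ∈ Oint) ∧ A * B = 1 ∧ B * A = 1

/-- Block-diagonal embedding of an `M×M` matrix into the top-left corner of an `n×n`
matrix, with `1`'s on the rest of the diagonal. -/
noncomputable def embTop (M n : ℕ) (g : Matrix (Fin M) (Fin M) F) :
    Matrix (Fin n) (Fin n) F := fun i j =>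
  if hi : (i : ℕ) < M then
    (if hj : (j : ℕ) < M then g ⟨i, hi⟩ ⟨j, hj⟩ else 0)
  else (if (i : ℕ) = (j : ℕ) then 1 else 0)

/-- `u ∈ U⁻_{M,N}(F)`, the unipotent radical of the negative parabolic of type
`(M+1,1,…,1)` in `GL_N`: identity diagonal, and (0-based) the only nonzero off-diagonal
entries are in rows `i ≥ M+1` and columns `j < i`. -/
def InUminus (M : ℕ) {n : ℕ} (u : Matrix (Fin n) (Fin n) F) : Prop :=
  (∀ i, u i i = 1) ∧
  ∀ i j : Fin n, i ≠ j → ((i : ℕ) ≤ M ∨ (i : ℕ) ≤ (j : ℕ)) → u i j = 0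

/-- The representative `L_{(λ,(θ,θ'))} ∈ GL_N(F)`, `N = M+1+K`: the upper-left
`(M+1)×(M+1)` block has diagonal `t^{λ_i+θ_i}` (`i ≤ M`) and last row
`(t^{θ_1},…,t^{θ_{M+1}})`, and the lower-right block is `diag(t^{θ'_1},…,t^{θ'_K})`. -/
noncomputable def LmatN (M K : ℕ) (lam : Fin M → ℤ) (th : Fin (M + 1) → ℤ)
    (th' : Fin K → ℤ) : Matrix (Fin (M + 1 + K)) (Fin (M + 1 + K)) F := fun i j =>
  if hi : (i : ℕ) < M then
    (if (i : ℕ) = (j : ℕ) then tpow (lam ⟨i, hi⟩ + th ⟨i, by omega⟩) else 0)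
  else if hi2 : (i : ℕ) = M then
    (if hj : (j : ℕ) < M + 1 then tpow (th ⟨j, hj⟩) else 0)
  else if (i : ℕ) = (j : ℕ) then
    tpow (th' ⟨(i : ℕ) - (M + 1), by have := i.isLt; omega⟩)
  else 0

/-- Lower-triangular unipotent matrices. -/
def LowUnip {n : ℕ} (v : Matrix (Fin n) (Fin n) F) : Prop :=
  (∀ i, v i i = 1) ∧ ∀ i j : Fin n, (i : ℕ) < (j : ℕ) → v i j = 0

/-- Upper-triangular unipotent matrices. -/
def UpUnip {n : ℕ} (v : Matrix (Fin n) (Fin n) F) : Prop :=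
  (∀ i, v i i = 1) ∧ ∀ i j : Fin n, (j : ℕ) < (i : ℕ) → v i j = 0

/-- The diagonal matrix `diag(t^{f 0}, …, t^{f (n-1)})`. -/
noncomputable def tdiag {n : ℕ} (f : Fin n → ℤ) : Matrix (Fin n) (Fin n) F :=
  Matrix.diagonal fun i => tpow (f i)

/-- The matrix `D ∈ GL_N`: the identity matrix except that row `M+1` (1-based) is
`(1,1,…,1,0,…,0)` with `M+1` ones. -/
noncomputable def Dmat (M K : ℕ) : Matrix (Fin (M + 1 + K)) (Fin (M + 1 + K)) F :=
  fun i j =>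
    if (i : ℕ) = M then (if (j : ℕ) ≤ M then 1 else 0)
    else if i = j then 1 else 0

/-- Concatenation of `η : ℤ^{M+1}` and `η' : ℤ^{K}` into a sequence of length `N=M+1+K`. -/
def fullSeq (M K : ℕ) (eta : Fin (M + 1) → ℤ) (eta' : Fin K → ℤ) :
    Fin (M + 1 + K) → ℤ := fun i =>
  if h : (i : ℕ) < M + 1 then eta ⟨i, h⟩
  else eta' ⟨(i : ℕ) - (M + 1), by have := i.isLt; omega⟩

/-- The exponent sequence of `t^{-ξ} = diag(t^{-ξ_1},…,t^{-ξ_M},1,…,1)`. -/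
def xiExt (M K : ℕ) (xi : Fin M → ℤ) : Fin (M + 1 + K) → ℤ := fun i =>
  if h : (i : ℕ) < M then -(xi ⟨i, h⟩) else 0

/-- The simple roots `α_1, …, α_{M+N-1}` (`N = M+1+K`, so `M+N-1 = 2M+K`) of `GL(M|N)`
with respect to the mixed Borel, as elements of the weight lattice `ℤ^M × ℤ^N` with basis
`δ_1,…,δ_M` (first factor) and `ε_1,…,ε_N` (second factor):
`α_{2k-1} = -ε_k + δ_k`, `α_{2k} = -δ_k + ε_{k+1}` (`1 ≤ k ≤ M`), and
`α_{2M+j} = -ε_{M+j} + ε_{M+j+1}` (`1 ≤ j ≤ N-M-1`). -/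
noncomputable def sroot (M K : ℕ) (i : Fin (2 * M + K)) :
    (Fin M → ℤ) × (Fin (M + 1 + K) → ℤ) :=
  if h : (i : ℕ) < 2 * M then
    if (i : ℕ) % 2 = 0 then
      (Pi.single ⟨(i : ℕ) / 2, by omega⟩ 1, Pi.single ⟨(i : ℕ) / 2, by omega⟩ (-1))
    else
      (Pi.single ⟨(i : ℕ) / 2, by omega⟩ (-1), Pi.single ⟨(i : ℕ) / 2 + 1, by omega⟩ 1)
  else
    (0, Pi.single ⟨(i : ℕ) - 2 * M + M, by have := i.isLt; omega⟩ (-1)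
        + Pi.single ⟨(i : ℕ) - 2 * M + M + 1, by have := i.isLt; omega⟩ 1)

theorem tpow_add (a b : ℤ) : tpow (a + b) = tpow a * tpow b := by
  unfold tpow
  exact zpow_add₀ (by simp) a b

theorem tpow_zero : tpow 0 = 1 := by simp [tpow]

theorem tpow_eq_single (a : ℤ) : tpow a = HahnSeries.single a (1 : ℂ) := by
  unfold tpow
  exact (RatFunc.single_zpow a).symm

theorem tpow_ne (a : ℤ) : tpow a ≠ 0 := by
  rw [tpow_eq_single]; simp

theorem tpow_sum {ι : Type*} (s : Finset ι) (f : ι → ℤ) :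
    tpow (∑ i ∈ s, f i) = ∏ i ∈ s, tpow (f i) := by
  classical
  induction s using Finset.induction_on with
  | empty => simp [tpow_zero]
  | insert a s ha ih => rw [Finset.sum_insert ha, Finset.prod_insert ha, tpow_add, ih]

theorem mem_Oint_iff (f : F) : f ∈ Oint ↔ (0 : WithTop ℤ) ≤ f.orderTop := by
  rw [HahnSeries.le_orderTop_iff_forall]
  simp [Oint]

def OO : Subring F where
  carrier := Oint
  mul_mem' := by
    intro a b ha hb
    rw [mem_Oint_iff] at *
    exact le_trans (by simpa using add_le_add ha hb) HahnSeries.orderTop_add_le_mul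
  one_mem' := by
    intro m hm
    simp [HahnSeries.coeff_one, hm.ne]
  add_mem' := by
    intro a b ha hb m hm
    simp [ha m hm, hb m hm]
  zero_mem' := by
    intro m hm
    simp
  neg_mem' := by
    intro a ha m hm
    simp [ha m hm]

theorem tpow_mem_OO (a : ℤ) : tpow a ∈ OO ↔ 0 ≤ a := by
  change tpow a ∈ Oint ↔ _
  rw [mem_Oint_iff, tpow_eq_single, HahnSeries.orderTop_single (by simp)]
  simp

/-- valuation at least `m`. -/
def Vge (m : ℤ) (f : F) : Prop := tpow (-m) * f ∈ OO

theorem Vge_tpow (m a : ℤ) : Vge m (tpow a) ↔ m ≤ a := by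
  unfold Vge
  rw [← tpow_add, tpow_mem_OO]
  constructor <;> intro h <;> linarith

theorem Vge_zero (m : ℤ) : Vge m 0 := by
  unfold Vge; rw [mul_zero]; exact OO.zero_mem

theorem Vge_sum {ι : Type*} (m : ℤ) (s : Finset ι) (f : ι → F) (h : ∀ i ∈ s, Vge m (f i)) :
    Vge m (∑ i ∈ s, f i) := by
  unfold Vge
  rw [Finset.mul_sum]
  exact OO.sum_mem h

theorem Vge_mul (m : ℤ) (a f : F) (ha : a ∈ OO) (h : Vge m f) : Vge m (a * f) := by
  unfold Vge
  rw [mul_left_comm]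
  exact OO.mul_mem ha h

theorem det_mul_sum {k n : Type*} [Fintype k] [DecidableEq k] [Fintype n] [DecidableEq n]
    (X : Matrix k n F) (Y : Matrix n k F) :
    (X * Y).det = ∑ f : k → n, (∏ a, Y (f a) a) * (X.submatrix id f).det := by
  simp only [Matrix.det_apply', Matrix.mul_apply, Finset.prod_univ_sum, Fintype.piFinset_univ,
    Finset.mul_sum]
  rw [Finset.sum_comm]
  refine Finset.sum_congr rfl fun f _ => Finset.sum_congr rfl fun σ _ => ?_
  rw [Finset.prod_mul_distrib]
  simp
  ring

theorem det_mul_sum' {k n : Type*} [Fintype k] [DecidableEq k] [Fintype n] [DecidableEq n]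
    (X : Matrix n k F) (Y : Matrix k n F) :
    (Y * X).det = ∑ f : k → n, (∏ a, Y a (f a)) * (X.submatrix f id).det := by
  rw [← Matrix.det_transpose, Matrix.transpose_mul, det_mul_sum]
  refine Finset.sum_congr rfl fun f _ => ?_
  rw [← Matrix.det_transpose (X.submatrix f id)]
  rfl

theorem minors_mul {k n : Type*} [Fintype k] [DecidableEq k] [Fintype n] [DecidableEq n]
    (m : ℤ) (X : Matrix n n F) (C : Matrix n n F) (r : k → n) (hC : ∀ i j, C i j ∈ OO)
    (h : ∀ c : k → n, Vge m (X.submatrix r c).det) (c : k → n) :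
    Vge m ((X * C).submatrix r c).det := by
  have : (X * C).submatrix r c = X.submatrix r id * C.submatrix id c := by
    ext i j; simp [Matrix.mul_apply]
  rw [this, det_mul_sum]
  refine Vge_sum _ _ _ fun f _ => Vge_mul _ _ _ (OO.prod_mem fun a _ => hC _ _) ?_
  simpa using h f

theorem sub_mul_row {k n p : Type*} [Fintype k] [Fintype n] [DecidableEq k]
    (X : Matrix n n F) (Y : Matrix n n F) (r : k → n) (c : p → n) (hr : Function.Injective r)
    (h : ∀ a j, (∀ b, r b ≠ j) → X (r a) j = 0) :
    (X * Y).submatrix r c = X.submatrix r r * Y.submatrix r c := by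
  refine Matrix.ext fun a b => ?_
  simp only [Matrix.submatrix_apply, Matrix.mul_apply]
  symm
  apply Finset.sum_of_injOn r (hr.injOn) (by simp)
  · intro j _ hj
    rw [h a j, zero_mul]
    intro b hb
    exact hj ⟨b, by simp, hb⟩
  · intros; rfl

theorem sub_mul_col {k n p : Type*} [Fintype k] [Fintype n] [DecidableEq k]
    (X : Matrix n n F) (Y : Matrix n n F) (r : p → n) (c : k → n) (hr : Function.Injective c)
    (h : ∀ a j, (∀ b, c b ≠ j) → Y j (c a) = 0) :
    (X * Y).submatrix r c = X.submatrix r c * Y.submatrix c c := by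
  refine Matrix.ext fun a b => ?_
  simp only [Matrix.submatrix_apply, Matrix.mul_apply]
  symm
  apply Finset.sum_of_injOn c (hr.injOn) (by simp)
  · intro j _ hj
    rw [h b j, mul_zero]
    intro b hb
    exact hj ⟨b, by simp, hb⟩
  · intros; rfl

theorem sum_inj_le (n : ℕ) (w : ℕ → ℤ) (hw : ∀ a b, a ≤ b → b < n → w a ≤ w b) (k : ℕ)
    (e : Fin k → ℕ) (he : Function.Injective e) (hn : ∀ a, e a < n) :
    ∑ a ∈ Finset.range k, w a ≤ ∑ a, w (e a) := by
  rw [← Fin.sum_univ_eq_sum_range, ← Equiv.sum_comp (Tuple.sort e) (fun a => w (e a))]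
  have hs : StrictMono (e ∘ Tuple.sort e) :=
    (Tuple.monotone_sort e).strictMono_of_injective (he.comp (Tuple.sort e).injective)
  refine Finset.sum_le_sum fun a _ => hw _ _ ?_ (hn _)
  have : ∀ m (hm : m < k), m ≤ (e ∘ Tuple.sort e) ⟨m, hm⟩ := by
    intro m
    induction m with
    | zero => intro _; exact Nat.zero_le _
    | succ m ih =>
      intro hm
      have h1 := ih (by omega)
      have h2 : (e ∘ Tuple.sort e) ⟨m, by omega⟩ < (e ∘ Tuple.sort e) ⟨m + 1, hm⟩ :=
        hs (by simp)
      omega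
  exact this a a.2

theorem sum_fin_ite (w : ℕ → ℤ) (n i : ℕ) (h : i ≤ n) :
    (∑ j : Fin n, if (j : ℕ) < i then w j else 0) = ∑ j ∈ Finset.range i, w j := by
  rw [Fin.sum_univ_eq_sum_range (fun j => if j < i then w j else 0), ← Finset.sum_filter]
  congr 1
  ext x; simp; omega

theorem OO_det {k : Type*} [Fintype k] [DecidableEq k] (A : Matrix k k F)
    (h : ∀ i j, A i j ∈ OO) : A.det ∈ OO := by
  rw [Matrix.det_apply]
  refine OO.sum_mem fun σ _ => ?_
  rw [Units.smul_def]
  exact OO.zsmul_mem (OO.prod_mem fun i _ => h _ _) _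

theorem det_low {k : ℕ} (A : Matrix (Fin k) (Fin k) F) (h : ∀ i j, i < j → A i j = 0) :
    A.det = ∏ i, A i i :=
  Matrix.det_of_isLowerTriangular A (fun i j hij => h i j (by simpa using hij))

theorem det_up {k : ℕ} (A : Matrix (Fin k) (Fin k) F) (h : ∀ i j, j < i → A i j = 0) :
    A.det = ∏ i, A i i :=
  Matrix.det_of_isUpperTriangular (fun i j hij => h i j hij)

/-- extension by zero -/
def ext0 {n : ℕ} (w : Fin n → ℤ) (j : ℕ) : ℤ := if h : j < n then w ⟨j, h⟩ else 0

theorem ext0_lt {n : ℕ} (w : Fin n → ℤ) (j : ℕ) (h : j < n) : ext0 w j = w ⟨j, h⟩ := by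
  simp [ext0, h]

theorem ext0_fin {n : ℕ} (w : Fin n → ℤ) (j : Fin n) : ext0 w j = w j := by
  simp [ext0]

theorem embTop_mul (M n : ℕ) (hMn : M ≤ n) (g g' : Matrix (Fin M) (Fin M) F) :
    embTop M n g * embTop M n g' = embTop M n (g * g') := by
  refine Matrix.ext fun i j => ?_
  by_cases hi : (i : ℕ) < M
  · by_cases hj : (j : ℕ) < M
    · have := sub_mul_row (embTop M n g) (embTop M n g') (Fin.castLE hMn) (Fin.castLE hMn)
        (Fin.castLE_injective hMn) (by
          intro a j hj
          have : ¬ (j : ℕ) < M := fun h => hj ⟨j, h⟩ (by ext; simp)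
          simp [embTop, this])
      have := congrFun (congrFun this ⟨i, hi⟩) ⟨j, hj⟩
      have hs : ∀ g : Matrix (Fin M) (Fin M) F,
          (embTop M n g).submatrix (Fin.castLE hMn) (Fin.castLE hMn) = g := by
        intro g; refine Matrix.ext fun a b => ?_
        simp [embTop]
      rw [hs, hs] at this
      rw [Matrix.submatrix_apply] at this
      simpa [embTop, hi, hj] using this
    · rw [Matrix.mul_apply]
      simp only [embTop, hi, hj, dif_pos, dif_neg, not_false_eq_true]
      refine Finset.sum_eq_zero fun x _ => ?_
      by_cases hx : (x : ℕ) < M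
      · simp [hx]
      · simp [hx]
  · rw [Matrix.mul_apply, Finset.sum_eq_single i]
    · simp [embTop, hi]
    · intro x _ hx
      have : (i : ℕ) ≠ x := fun h => hx (Fin.ext h.symm)
      simp [embTop, hi, this]
    · simp

theorem embTop_one (M n : ℕ) : embTop M n (1 : Matrix (Fin M) (Fin M) F) = 1 := by
  refine Matrix.ext fun i j => ?_
  simp only [embTop, Matrix.one_apply, Fin.ext_iff]
  split_ifs <;> first | rfl | omega

theorem embTop_OO (M n : ℕ) (g : Matrix (Fin M) (Fin M) F) (h : ∀ i j, g i j ∈ OO) (i j) :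
    embTop M n g i j ∈ OO := by
  unfold embTop
  split_ifs
  · exact h _ _
  · exact OO.zero_mem
  · exact OO.one_mem
  · exact OO.zero_mem

theorem eq_of_unit (a b : ℤ) (x y : F) (hx : x ∈ OO) (hy : y ∈ OO) (hxy : x * y = 1)
    (h : tpow a * x = tpow b) : a = b := by
  apply le_antisymm
  · rw [← Vge_tpow, ← h, mul_comm]
    exact Vge_mul _ _ _ hx ((Vge_tpow _ _).2 le_rfl)
  · rw [← Vge_tpow]
    have : tpow a = y * tpow b := by rw [← h, mul_left_comm, mul_comm y, hxy, mul_one]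
    rw [this]
    exact Vge_mul _ _ _ hy ((Vge_tpow _ _).2 le_rfl)

section core

variable (M K : ℕ)
    (lam xi : Fin M → ℤ) (th eta : Fin (M + 1) → ℤ) (thp etap : Fin K → ℤ)
    (u1 g : Matrix (Fin M) (Fin M) F)
    (u2 C v : Matrix (Fin (M + 1 + K)) (Fin (M + 1 + K)) F)

/-- first factor -/
theorem W_apply (i j : Fin (M + 1 + K)) :
    (embTop M (M + 1 + K) u1 * tdiag (xiExt M K xi)) i j
      = embTop M (M + 1 + K) u1 i j * tpow (xiExt M K xi j) := by
  rw [tdiag, Matrix.mul_diagonal]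

theorem mul_row_delta {n : ℕ} (X Y : Matrix (Fin n) (Fin n) F) (i j : Fin n)
    (h : ∀ j, X i j = if i = j then 1 else 0) : (X * Y) i j = Y i j := by
  rw [Matrix.mul_apply]
  simp [h]

theorem UTG_row (i : Fin (M + 1 + K)) (hi : M ≤ (i : ℕ)) (j : Fin (M + 1 + K)) :
    (embTop M (M + 1 + K) u1 * tdiag (xiExt M K xi) * embTop M (M + 1 + K) g) i j
      = if i = j then 1 else 0 := by
  have h1 : ¬ (i : ℕ) < M := by omega
  rw [mul_row_delta]
  · simp [embTop, h1, Fin.ext_iff]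
  · intro j
    rw [mul_row_delta]
    · by_cases hij : i = j
      · subst hij; simp [tdiag, xiExt, h1, tpow_zero]
      · simp [tdiag, hij]
    · intro j; simp [embTop, h1, Fin.ext_iff]

theorem core1 (hu2 : InUminus M u2) (hv : UpUnip v)
    (hC : ∀ i j, C i j ∈ OO)
    (h : embTop M (M + 1 + K) u1 * tdiag (xiExt M K xi) *
              embTop M (M + 1 + K) g * u2 * LmatN M K lam th thp =
        Dmat M K * v * tdiag (fullSeq M K eta etap) * C)
    (s : ℕ) (hs : M + 1 ≤ s) (hs' : s ≤ M + 1 + K) :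
    ∑ j ∈ Finset.Ico s (M + 1 + K), ext0 (fullSeq M K eta etap) j
      ≤ ∑ j ∈ Finset.Ico s (M + 1 + K), ext0 (fullSeq M K th thp) j := by
  obtain ⟨k, hk⟩ : ∃ k, M + 1 + K = s + k := ⟨M + 1 + K - s, by omega⟩
  let r : Fin k → Fin (M + 1 + K) := fun a => ⟨s + a, by omega⟩
  have hr : Function.Injective r := by
    intro a b hab; ext; simpa [r] using hab
  have hout : ∀ j : Fin (M + 1 + K), (∀ b, r b ≠ j) → (j : ℕ) < s := by
    intro j hj
    by_contra hlt
    exact hj ⟨j - s, by omega⟩ (by ext; simp [r]; omega)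
  have hsum : ∀ w : Fin (M + 1 + K) → ℤ,
      ∑ j ∈ Finset.Ico s (M + 1 + K), ext0 w j = ∑ a : Fin k, w (r a) := by
    intro w
    rw [Finset.sum_Ico_eq_sum_range, show M + 1 + K - s = k by omega,
      ← Fin.sum_univ_eq_sum_range (fun a => ext0 w (s + a))]
    refine Finset.sum_congr rfl fun a _ => ?_
    rw [ext0_lt]
  rw [hsum, hsum]
  -- right side minors
  have hR : ∀ c : Fin k → Fin (M + 1 + K),
      Vge (∑ a : Fin k, fullSeq M K eta etap (r a))
        ((Dmat M K * v * tdiag (fullSeq M K eta etap)).submatrix r c).det := by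
    intro c
    rw [Matrix.mul_assoc, sub_mul_row _ _ r c hr, sub_mul_row _ _ r c hr,
      ← Matrix.mul_one (tdiag _), sub_mul_row _ _ r c hr]
    · rw [← Matrix.mul_assoc, ← Matrix.mul_assoc, Matrix.det_mul, mul_comm]
      · refine Vge_mul _ _ _ (OO_det _ ?_) ?_
        · intro i j
          rw [Matrix.submatrix_apply, Matrix.one_apply]
          split_ifs
          · exact OO.one_mem
          · exact OO.zero_mem
        · rw [Matrix.det_mul, Matrix.det_mul, det_low, det_up (v.submatrix r r),
            det_up ((tdiag _).submatrix r r)]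
          · have h1 : ∀ a, (Dmat M K).submatrix r r a a = 1 := by
              intro a; simp only [Matrix.submatrix_apply, Dmat]; simp; omega
            have h2 : ∀ a, v.submatrix r r a a = 1 := fun a => hv.1 _
            have h3 : ∀ a, (tdiag (fullSeq M K eta etap)).submatrix r r a a
              = tpow (fullSeq M K eta etap (r a)) := by intro a; simp [tdiag]
            simp only [h1, h2, h3, Finset.prod_const_one, one_mul]
            rw [← tpow_sum, Vge_tpow]
          · intro a b hab
            have : r a ≠ r b := fun h => hab.ne' (hr h)
            simp [tdiag, this]
          · intro a b hab
            exact hv.2 _ _ (by simpa [r] using hab)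
          · intro a b hab
            have : r a ≠ r b := fun h => hab.ne (hr h)
            have h2 : ((r a : Fin (M + 1 + K)) : ℕ) ≠ M := by simp [r]; omega
            simp [Dmat, this, h2]
    · intro a j hj
      simp [tdiag, hj a]
    · intro a j hj
      exact hv.2 _ _ (by have := hout j hj; simp only [r]; omega)
    · intro a j hj
      have h2 : ((r a : Fin (M + 1 + K)) : ℕ) ≠ M := by simp [r]; omega
      simp [Dmat, hj a, h2]
  have hL := minors_mul _ _ C r hC hR r
  have hsub : (embTop M (M + 1 + K) u1 * tdiag (xiExt M K xi) *
      embTop M (M + 1 + K) g * (u2 * LmatN M K lam th thp)).submatrix r r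
      = (u2 * LmatN M K lam th thp).submatrix r r := by
    refine Matrix.ext fun a b => ?_
    rw [Matrix.submatrix_apply, mul_row_delta, Matrix.submatrix_apply]
    intro j
    exact UTG_row M K xi u1 g _ (by simp only [r]; omega) j
  have hLr : ∀ j b, LmatN M K lam th thp j (r b)
      = if j = r b then tpow (fullSeq M K th thp (r b)) else 0 := by
    intro j b
    simp only [LmatN, fullSeq, r, Fin.ext_iff]
    split_ifs <;> first | rfl | omega | skip
    congr 3; omega
  rw [← h, Matrix.mul_assoc, hsub, sub_mul_col _ _ r r hr, Matrix.det_mul, det_low, det_low] at hL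
  · simp only [Matrix.submatrix_apply, hu2.1, hLr, if_true, Finset.prod_const_one, one_mul] at hL
    rwa [← tpow_sum, Vge_tpow] at hL
  · intro a b hab
    have : r a ≠ r b := fun h => hab.ne (hr h)
    simp [hLr, this]
  · intro a b hab
    have : r a ≠ r b := fun h => hab.ne (hr h)
    exact hu2.2 _ _ this (Or.inr (by simp only [r]; have : (a:ℕ) < b := hab; omega))
  · intro a j hj
    rw [hLr, if_neg (fun h => hj a h.symm)]

theorem ext0_lam_mono (hlam : Monotone lam) (a b : ℕ) (hab : a ≤ b) (hb : b < M) :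
    ext0 lam a ≤ ext0 lam b := by
  rw [ext0_lt _ _ hb, ext0_lt _ _ (by omega)]
  exact hlam (by simpa using hab)

theorem ext0_full (j : ℕ) (hj : j < M + 1) :
    ext0 (fullSeq M K th thp) j = th ⟨j, hj⟩ := by
  rw [ext0_lt _ _ (by omega)]
  simp [fullSeq, hj]

theorem LmatN_apply (p q : Fin (M + 1 + K)) (hp : (p : ℕ) ≤ M) :
    LmatN M K lam th thp p q = 0 ∨ ((q : ℕ) < M + 1 ∧ LmatN M K lam th thp p q
      = tpow (ext0 lam p + ext0 (fullSeq M K th thp) q)) := by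
  by_cases hq : (q : ℕ) < M + 1
  · rw [ext0_full _ _ _ _ _ hq]
    by_cases h1 : (p : ℕ) < M
    · by_cases h2 : (p : ℕ) = q
      · right
        refine ⟨hq, ?_⟩
        simp [LmatN, ext0, h2, show (q : ℕ) < M by omega]
      · left
        simp [LmatN, h1, h2]
    · right
      refine ⟨hq, ?_⟩
      have : (p : ℕ) = M := by omega
      simp [LmatN, ext0, this, hq]
  · left
    simp only [LmatN]
    split_ifs <;> first | rfl | omega

theorem L_minor (hlam : Monotone lam) (hth : Monotone th) (i k : ℕ) (hk : k = i ∨ k = i + 1)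
    (f c : Fin k → Fin (M + 1 + K))
    (hf : ∀ a : Fin k, (a : ℕ) < i → (f a : ℕ) < M)
    (hf' : ∀ a : Fin k, ¬ (a : ℕ) < i → (f a : ℕ) = M) :
    Vge (∑ j ∈ Finset.range i, ext0 lam j + ∑ j ∈ Finset.range k, ext0 (fullSeq M K th thp) j)
      ((LmatN M K lam th thp).submatrix f c).det := by
  by_cases hfi : Function.Injective f
  swap
  · simp only [Function.Injective, not_forall] at hfi
    obtain ⟨a, b, hab, hne⟩ := hfi
    rw [Matrix.det_zero_of_row_eq hne]
    · exact Vge_zero _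
    · funext x; simp [hab]
  by_cases hci : Function.Injective c
  swap
  · simp only [Function.Injective, not_forall] at hci
    obtain ⟨a, b, hab, hne⟩ := hci
    rw [Matrix.det_zero_of_column_eq hne]
    · exact Vge_zero _
    · intro x; simp [hab]
  rw [← Matrix.det_transpose, Matrix.det_apply']
  refine Vge_sum _ _ _ fun σ _ => Vge_mul _ _ _ ?_ ?_
  · exact intCast_mem OO _
  simp only [Matrix.transpose_apply, Matrix.submatrix_apply]
  by_cases hz : ∃ a, LmatN M K lam th thp (f a) (c (σ a)) = 0
  · obtain ⟨a, ha⟩ := hz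
    rw [Finset.prod_eq_zero (Finset.mem_univ a) ha]
    exact Vge_zero _
  push Not at hz
  have hfM : ∀ a, (f a : ℕ) ≤ M := by
    intro a
    by_cases h : (a : ℕ) < i
    · exact (hf a h).le
    · exact (hf' a h).le
  have hent := fun a => (LmatN_apply M K lam th thp (f a) (c (σ a)) (hfM a)).resolve_left (hz a)
  rw [Finset.prod_congr rfl fun a _ => (hent a).2, ← tpow_sum, Vge_tpow, Finset.sum_add_distrib]
  apply add_le_add
  · rcases hk with rfl | rfl
    · exact sum_inj_le M _ (ext0_lam_mono M lam hlam) k (fun a => (f a : ℕ))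
        (fun a b hab => hfi (Fin.ext hab)) (fun a => hf a a.2)
    · rw [Fin.sum_univ_castSucc]
      have h0 : ext0 lam (f (Fin.last i)) = 0 := by
        rw [hf' _ (by simp)]; simp [ext0]
      rw [h0, add_zero]
      exact sum_inj_le M _ (ext0_lam_mono M lam hlam) i (fun a => (f a.castSucc : ℕ))
        (fun a b hab => Fin.castSucc_injective _ (hfi (Fin.ext hab)))
        (fun a => hf _ (by simp))
  · apply sum_inj_le (M + 1) _ _ k (fun a => (c (σ a) : ℕ))
      (fun a b hab => σ.injective (hci (Fin.ext hab))) (fun a => (hent a).1)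
    intro a b hab hb
    rw [ext0_full _ _ _ _ _ hb, ext0_full _ _ _ _ _ (by omega)]
    exact hth (by simpa using hab)

theorem xiExt_eq (j : Fin (M + 1 + K)) : xiExt M K xi j = - ext0 xi j := by
  simp only [xiExt, ext0]
  split_ifs <;> simp

theorem embTop_diag (hu1 : LowUnip u1) (j : Fin (M + 1 + K)) :
    embTop M (M + 1 + K) u1 j j = 1 := by
  simp only [embTop]
  split_ifs
  · exact hu1.1 _
  · rfl

theorem embTop_low (hu1 : LowUnip u1) (i j : Fin (M + 1 + K)) (hij : (i : ℕ) < j) :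
    embTop M (M + 1 + K) u1 i j = 0 := by
  simp only [embTop]
  split_ifs
  · exact hu1.2 _ _ hij
  · rfl
  · omega
  · rfl

theorem core2 (hlam : Monotone lam) (hth : Monotone th) (hu1 : LowUnip u1)
    (hg : ∀ i j, g i j ∈ OO) (hu2 : InUminus M u2) (hv : UpUnip v)
    (hC : ∀ i j, C i j ∈ OO)
    (h : embTop M (M + 1 + K) u1 * tdiag (xiExt M K xi) *
              embTop M (M + 1 + K) g * u2 * LmatN M K lam th thp * C =
        Dmat M K * v * tdiag (fullSeq M K eta etap))
    (i k : ℕ) (hk : k = i ∨ k = i + 1) (hi : i ≤ M) (hkM : k ≤ M + 1) :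
    ∑ j ∈ Finset.range i, ext0 lam j + ∑ j ∈ Finset.range k, ext0 (fullSeq M K th thp) j
      ≤ ∑ j ∈ Finset.range i, ext0 xi j + ∑ j ∈ Finset.range k, ext0 (fullSeq M K eta etap) j := by
  let r : Fin k → Fin (M + 1 + K) := fun a =>
    if (a : ℕ) < i then ⟨a, by omega⟩ else ⟨M, by omega⟩
  have hrlt : ∀ a : Fin k, (a : ℕ) < i → (r a : ℕ) = a := by
    intro a ha; simp [r, ha]
  have hrge : ∀ a : Fin k, ¬ (a : ℕ) < i → (r a : ℕ) = M := by
    intro a ha; simp [r, ha]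
  have hrinj : StrictMono (fun a => (r a : ℕ)) := by
    intro a b hab
    have hab' : (a : ℕ) < b := hab
    have ha : (a : ℕ) < i := by omega
    simp only [hrlt a ha]
    by_cases hb : (b : ℕ) < i
    · rwa [hrlt b hb]
    · rw [hrge b hb]; omega
  have hr : Function.Injective r := fun a b hab => hrinj.injective (by simp [hab])
  let c : Fin k → Fin (M + 1 + K) := fun a => ⟨a, by omega⟩
  have hc : Function.Injective c := by
    intro a b hab; ext; simpa [c] using hab
  have hcout : ∀ j : Fin (M + 1 + K), (∀ b, c b ≠ j) → k ≤ (j : ℕ) := by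
    intro j hj
    by_contra hlt
    exact hj ⟨j, by omega⟩ (by ext; simp [c])
  -- left side
  have hL1 : ∀ c' : Fin k → Fin (M + 1 + K),
      Vge (∑ j ∈ Finset.range i, ext0 lam j
          + ∑ j ∈ Finset.range k, ext0 (fullSeq M K th thp) j)
        ((embTop M (M + 1 + K) g * (u2 * LmatN M K lam th thp)).submatrix r c').det := by
    intro c'
    have : (embTop M (M + 1 + K) g * (u2 * LmatN M K lam th thp)).submatrix r c'
        = (embTop M (M + 1 + K) g).submatrix r id
          * (u2 * LmatN M K lam th thp).submatrix id c' := by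
      refine Matrix.ext fun i j => ?_
      simp only [Matrix.mul_apply, Matrix.submatrix_apply, id]
    rw [this, det_mul_sum']
    refine Vge_sum _ _ _ fun f _ => ?_
    by_cases hz : ∃ a, embTop M (M + 1 + K) g (r a) (f a) = 0
    · obtain ⟨a, ha⟩ := hz
      rw [Finset.prod_eq_zero (Finset.mem_univ a) (by simpa using ha), zero_mul]
      exact Vge_zero _
    push Not at hz
    have hf : ∀ a : Fin k, (a : ℕ) < i → (f a : ℕ) < M := by
      intro a ha
      by_contra hcon
      apply hz a
      have : (r a : ℕ) < M := by rw [hrlt a ha]; omega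
      simp [embTop, this, hcon]
    have hf' : ∀ a : Fin k, ¬ (a : ℕ) < i → (f a : ℕ) = M := by
      intro a ha
      by_contra hcon
      apply hz a
      have h1 := hrge a ha
      simp [embTop, h1, Ne.symm hcon]
    refine Vge_mul _ _ _ (OO.prod_mem fun a _ => embTop_OO _ _ _ hg _ _) ?_
    have h2 : (((u2 * LmatN M K lam th thp).submatrix id c').submatrix f id)
        = (LmatN M K lam th thp).submatrix f c' := by
      refine Matrix.ext fun a b => ?_
      simp only [Matrix.submatrix_apply, id]
      apply mul_row_delta
      intro j
      by_cases hj : f a = j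
      · subst hj; simp [hu2.1]
      · rw [if_neg hj]
        apply hu2.2 _ _ hj
        left
        by_cases ha : (a : ℕ) < i
        · exact (hf a ha).le
        · exact (hf' a ha).le
    rw [h2]
    exact L_minor M K lam th thp hlam hth i k hk f c' hf hf'
  have hL2 := minors_mul _ _ C r hC hL1 c
  have hdet := congrArg (fun X => (Matrix.submatrix X r c).det) h
  have hassoc : embTop M (M + 1 + K) u1 * tdiag (xiExt M K xi) *
              embTop M (M + 1 + K) g * u2 * LmatN M K lam th thp * C =
      (embTop M (M + 1 + K) u1 * tdiag (xiExt M K xi)) *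
      (embTop M (M + 1 + K) g * (u2 * LmatN M K lam th thp) * C) := by
    simp only [Matrix.mul_assoc]
  rw [hassoc, sub_mul_row _ _ r c hr, Matrix.det_mul, Matrix.mul_assoc (Dmat M K), sub_mul_col (Dmat M K) _ r c hc,
    Matrix.det_mul, det_low, det_low ((Dmat M K).submatrix r c),
    det_up ((v * tdiag (fullSeq M K eta etap)).submatrix c c)] at hdet
  · have e1 : ∀ a : Fin k, (embTop M (M + 1 + K) u1 * tdiag (xiExt M K xi)).submatrix r r a a
        = tpow (if (a : ℕ) < i then - ext0 xi a else 0) := by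
      intro a
      rw [Matrix.submatrix_apply, W_apply, embTop_diag _ _ _ hu1, one_mul, xiExt_eq]
      by_cases ha : (a : ℕ) < i
      · rw [hrlt a ha, if_pos ha]
      · rw [hrge a ha, if_neg ha]; simp [ext0]
    have e2 : ∀ a : Fin k, (Dmat M K).submatrix r c a a = 1 := by
      intro a
      rw [Matrix.submatrix_apply]
      by_cases ha : (a : ℕ) < i
      · have h1 := hrlt a ha
        have h2 : (r a : ℕ) ≠ M := by omega
        have h3 : r a = c a := Fin.ext h1
        simp only [Dmat, if_neg h2, if_pos h3]
      · have h1 := hrge a ha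
        have h2 : (c a : ℕ) ≤ M := by simp only [c]; omega
        simp only [Dmat, if_pos h1, if_pos h2]
    have e3 : ∀ a : Fin k, (v * tdiag (fullSeq M K eta etap)).submatrix c c a a
        = tpow (ext0 (fullSeq M K eta etap) a) := by
      intro a
      rw [Matrix.submatrix_apply, tdiag, Matrix.mul_diagonal, hv.1, one_mul, ext0_lt]
    simp only [e1, e2, e3, Finset.prod_const_one, one_mul, ← tpow_sum] at hdet
    rw [sum_fin_ite (fun a => - ext0 xi a) k i (by omega), Fin.sum_univ_eq_sum_range,
      Finset.sum_neg_distrib] at hdet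
    rw [← Vge_tpow, tpow_add, ← hdet, ← mul_assoc, ← tpow_add, add_neg_cancel, tpow_zero, one_mul]
    exact hL2
  · intro a b hab
    rw [Matrix.submatrix_apply, tdiag, Matrix.mul_diagonal, hv.2 _ _ hab, zero_mul]
  · intro a b hab
    have hab' : (a : ℕ) < b := hab
    have ha : (a : ℕ) < i := by omega
    have h1 := hrlt a ha
    have h2 : (r a : ℕ) ≠ M := by omega
    have h3 : r a ≠ c b := by
      intro h; have := congrArg Fin.val h; simp only [c] at this; omega
    simp only [Matrix.submatrix_apply, Dmat, if_neg h2, if_neg h3]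
  · intro a b hab
    rw [Matrix.submatrix_apply, W_apply, embTop_low _ _ _ hu1 _ _ (hrinj hab), zero_mul]
  · intro a j hj
    rw [tdiag, Matrix.mul_diagonal, hv.2, zero_mul]
    have := hcout j hj
    simp only [c]; omega
  · intro a j hj
    rw [W_apply]
    by_cases ha : (a : ℕ) < i
    · have h1 := hrlt a ha
      rw [embTop_low _ _ _ hu1, zero_mul]
      by_contra hcon
      have hlt : (j : ℕ) < k := by omega
      apply hj ⟨j, hlt⟩
      apply Fin.ext
      rw [hrlt _ (by simp; omega)]
    · have h1 := hrge a ha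
      have h2 : (r a : ℕ) ≠ j := fun h => hj a (Fin.ext h)
      simp [embTop, show ¬ (r a : ℕ) < M by omega, h2]

theorem core3 (hu1 : LowUnip u1) (hu2 : InUminus M u2) (hv : UpUnip v)
    (g' C' : _) (hg : ∀ i j, g i j ∈ OO) (hg' : ∀ i j, g' i j ∈ OO) (hgg : g * g' = 1)
    (hC : ∀ i j, C i j ∈ OO) (hC' : ∀ i j, C' i j ∈ OO) (hCC : C * C' = 1)
    (h : embTop M (M + 1 + K) u1 * tdiag (xiExt M K xi) *
              embTop M (M + 1 + K) g * u2 * LmatN M K lam th thp * C =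
        Dmat M K * v * tdiag (fullSeq M K eta etap)) :
    ∑ j ∈ Finset.range M, ext0 lam j + ∑ j ∈ Finset.range (M + 1 + K), ext0 (fullSeq M K th thp) j
      = ∑ j ∈ Finset.range M, ext0 xi j
        + ∑ j ∈ Finset.range (M + 1 + K), ext0 (fullSeq M K eta etap) j := by
  have hext : ∀ w : Fin M → ℤ,
      ∑ j ∈ Finset.range (M + 1 + K), ext0 w j = ∑ j ∈ Finset.range M, ext0 w j := by
    intro w
    symm
    apply Finset.sum_subset
    · intro x; simp; omega
    · intro x _ hx
      have : ¬ x < M := by simpa using hx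
      simp [ext0, this]
  have hdet := congrArg Matrix.det h
  simp only [Matrix.det_mul] at hdet
  have d1 : (embTop M (M + 1 + K) u1).det = 1 := by
    rw [det_low _ (fun i j hij => embTop_low M K u1 hu1 i j hij)]
    simp [embTop_diag M K u1 hu1]
  have d2 : (tdiag (xiExt M K xi)).det = tpow (- ∑ j ∈ Finset.range M, ext0 xi j) := by
    rw [tdiag, Matrix.det_diagonal, ← tpow_sum]
    simp only [xiExt_eq, Finset.sum_neg_distrib]
    rw [Fin.sum_univ_eq_sum_range, hext]
  have d3 : u2.det = 1 := by
    rw [det_low _ (fun i j hij => hu2.2 i j hij.ne (Or.inr (le_of_lt hij)))]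
    simp [hu2.1]
  have d4 : (LmatN M K lam th thp).det = tpow (∑ j ∈ Finset.range M, ext0 lam j
      + ∑ j ∈ Finset.range (M + 1 + K), ext0 (fullSeq M K th thp) j) := by
    rw [det_low, ← hext lam, ← Finset.sum_add_distrib, ← Fin.sum_univ_eq_sum_range
      (fun j => ext0 lam j + ext0 (fullSeq M K th thp) j), tpow_sum]
    · refine Finset.prod_congr rfl fun j _ => ?_
      rw [ext0_fin]
      simp only [LmatN, ext0, fullSeq]
      split_ifs <;> first | rfl | omega | simp
    · intro i j hij
      have hij' : (i : ℕ) < j := hij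
      simp only [LmatN]
      split_ifs <;> first | rfl | omega
  have d5 : (Dmat M K).det = 1 := by
    rw [det_low]
    · refine Finset.prod_eq_one fun j _ => ?_
      simp only [Dmat]
      split_ifs <;> first | rfl | omega
    · intro i j hij
      have hij' : (i : ℕ) < j := hij
      simp only [Dmat]
      split_ifs <;> first | rfl | omega
  have d6 : v.det = 1 := by
    rw [det_up _ (fun i j hij => hv.2 i j hij)]
    simp [hv.1]
  have d7 : (tdiag (fullSeq M K eta etap)).det
      = tpow (∑ j ∈ Finset.range (M + 1 + K), ext0 (fullSeq M K eta etap) j) := by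
    rw [tdiag, Matrix.det_diagonal, ← tpow_sum, ← Fin.sum_univ_eq_sum_range]
    simp only [ext0_fin]
  rw [d1, d2, d3, d4, d5, d6, d7] at hdet
  have key := eq_of_unit (- ∑ j ∈ Finset.range M, ext0 xi j + (∑ j ∈ Finset.range M, ext0 lam j
      + ∑ j ∈ Finset.range (M + 1 + K), ext0 (fullSeq M K th thp) j))
      (∑ j ∈ Finset.range (M + 1 + K), ext0 (fullSeq M K eta etap) j)
      ((embTop M (M + 1 + K) g).det * C.det) ((embTop M (M + 1 + K) g').det * C'.det)
      (OO.mul_mem (OO_det _ (embTop_OO _ _ _ hg)) (OO_det _ hC))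
      (OO.mul_mem (OO_det _ (embTop_OO _ _ _ hg')) (OO_det _ hC'))
      (by
        rw [mul_mul_mul_comm, ← Matrix.det_mul, ← Matrix.det_mul, hCC,
          embTop_mul _ _ (by omega), hgg, embTop_one]
        simp)
      (by rw [tpow_add]; linear_combination hdet)
  linarith

end core

section roots

variable (M K : ℕ)

theorem sroot_fst (p : Fin (2 * M + K)) (k : Fin M) :
    (sroot M K p).1 k = (if (p : ℕ) + 1 = 2 * (k : ℕ) + 1 then 1 else 0)
      - (if (p : ℕ) = 2 * (k : ℕ) + 1 then 1 else 0) := by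
  unfold sroot
  split_ifs <;> simp [Pi.single_apply, Fin.ext_iff] <;> (try split_ifs) <;> omega

/-- position of `ε_q` -/
def pos (q : ℕ) : ℕ := if q ≤ M then 2 * q else M + q

theorem sroot_snd (p : Fin (2 * M + K)) (q : Fin (M + 1 + K)) :
    (sroot M K p).2 q = (if (p : ℕ) + 1 = pos M q then 1 else 0)
      - (if (p : ℕ) = pos M q then 1 else 0) := by
  unfold sroot pos
  have := q.2
  have := p.2
  split_ifs <;> simp [Pi.single_apply, Fin.ext_iff] <;> (try split_ifs) <;> omega

theorem tele (n : ℕ) (A : ℕ → ℤ) (hA : A n = 0) (P : ℕ) (hP : P ≤ n) :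
    ∑ p : Fin n, A p * ((if (p : ℕ) + 1 = P then 1 else 0) - (if (p : ℕ) = P then 1 else 0))
      = (if P = 0 then 0 else A (P - 1)) - A P := by
  rw [Fin.sum_univ_eq_sum_range
    (fun p => A p * ((if p + 1 = P then 1 else 0) - (if p = P then 1 else 0)))]
  simp only [mul_sub, Finset.sum_sub_distrib, mul_ite, mul_one, mul_zero]
  congr 1
  · rcases P with _ | P
    · simp
    · simp; omega
  · rw [Finset.sum_ite_eq']
    split_ifs with h
    · rfl
    · have : P = n := by simp at h; omega
      rw [this, hA]

/-- coefficients of the simple roots -/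
def coefA (x y : ℕ → ℤ) (p : ℕ) : ℤ :=
  ∑ j ∈ Finset.range (min ((p + 1) / 2) M), x j
    + ∑ j ∈ Finset.range (if p < 2 * M then p / 2 + 1 else p - M + 1), y j

theorem coefA_odd (x y : ℕ → ℤ) (k : ℕ) (hk : k < M) :
    coefA M x y (2 * k) - coefA M x y (2 * k + 1) = - x k := by
  unfold coefA
  rw [show min ((2 * k + 1) / 2) M = k by omega, show min ((2 * k + 1 + 1) / 2) M = k + 1 by omega,
    if_pos (by omega), if_pos (by omega), show (2 * k + 1) / 2 = 2 * k / 2 by omega,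
    Finset.sum_range_succ x]
  ring

theorem coefA_pos (x y : ℕ → ℤ) (q : ℕ) :
    (if pos M q = 0 then 0 else coefA M x y (pos M q - 1)) - coefA M x y (pos M q) = - y q := by
  unfold coefA pos
  rcases Nat.eq_zero_or_pos q with rfl | hq
  · by_cases hM : M = 0
    · simp [hM]
    · simp
  · rw [if_neg (by split_ifs <;> omega)]
    have e1 : min (((if q ≤ M then 2 * q else M + q) - 1 + 1) / 2) M
        = min (((if q ≤ M then 2 * q else M + q) + 1) / 2) M := by split_ifs <;> omega
    have e2 : (if (if q ≤ M then 2 * q else M + q) - 1 < 2 * M then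
        ((if q ≤ M then 2 * q else M + q) - 1) / 2 + 1
        else (if q ≤ M then 2 * q else M + q) - 1 - M + 1) = q := by split_ifs <;> omega
    have e3 : (if (if q ≤ M then 2 * q else M + q) < 2 * M then
        (if q ≤ M then 2 * q else M + q) / 2 + 1
        else (if q ≤ M then 2 * q else M + q) - M + 1) = q + 1 := by split_ifs <;> omega
    rw [e1, e2, e3, Finset.sum_range_succ y]
    ring

end roots

theorem sum_fin_tail (w : ℕ → ℤ) (K i m : ℕ) (hi : i ≤ K) (z : Fin K → ℤ)
    (hz : ∀ j : Fin K, w (m + j) = z j) :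
    (∑ j : Fin K, if K - i ≤ (j : ℕ) then z j else 0)
      = ∑ j ∈ Finset.Ico (m + (K - i)) (m + K), w j := by
  have : ∀ j : Fin K, (if K - i ≤ (j : ℕ) then z j else 0)
      = (fun j : ℕ => if K - i ≤ j then w (m + j) else 0) j := by
    intro j; simp [hz]
  rw [Finset.sum_congr rfl fun j _ => this j,
    Fin.sum_univ_eq_sum_range (fun j : ℕ => if K - i ≤ j then w (m + j) else 0), ← Finset.sum_filter,
    add_comm m (K - i), add_comm m K, ← Finset.sum_Ico_add w (K - i) K m]
  congr 1
  ext j; simp; omega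

/-- Suppose `B ∈ GL_N(F)` (`N = M+1+K`) lies both in
`U⁻_M(F) · t^{-ξ} · GL_M(O) · U⁻_{M,N}(F) · L_{(λ,(θ,θ'))} · GL_N(O)` and in
`D · U_N(F) · t^{(η,η')} · GL_N(O)`, with `(λ,θ)` dominant.  Then for every
`1 ≤ i ≤ N-M-1`: `η'_{N-M-i}+…+η'_{N-M-1} ≤ θ'_{N-M-i}+…+θ'_{N-M-1}`; for every
`1 ≤ i ≤ M`: `(ξ_1+η_1)+…+(ξ_i+η_i) ≥ (λ_1+θ_1)+…+(λ_i+θ_i)`; and for every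
`0 ≤ i ≤ M`: `(ξ_1+η_1)+…+(ξ_i+η_i)+η_{i+1} ≥ (λ_1+θ_1)+…+(λ_i+θ_i)+θ_{i+1}`.
Equivalently, `(λ,(θ,θ')) ≥ (ξ,(η,η'))` in the root order of `GL(M|N)`. -/
theorem stmt4 (M K : ℕ)
    (lam xi : Fin M → ℤ) (th eta : Fin (M + 1) → ℤ) (thp etap : Fin K → ℤ)
    (hlam : Monotone lam) (hth : Monotone th)
    (B : Matrix (Fin (M + 1 + K)) (Fin (M + 1 + K)) F)
    (h1 : ∃ (u1 : Matrix (Fin M) (Fin M) F) (g : Matrix (Fin M) (Fin M) F)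
        (u2 C : Matrix (Fin (M + 1 + K)) (Fin (M + 1 + K)) F),
        LowUnip u1 ∧ InGLO g ∧ InUminus M u2 ∧ InGLO C ∧
          B = embTop M (M + 1 + K) u1 * tdiag (xiExt M K xi) *
              embTop M (M + 1 + K) g * u2 * LmatN M K lam th thp * C)
    (h2 : ∃ (v C' : Matrix (Fin (M + 1 + K)) (Fin (M + 1 + K)) F),
        UpUnip v ∧ InGLO C' ∧
          B = Dmat M K * v * tdiag (fullSeq M K eta etap) * C') :
    (∀ i : ℕ, 1 ≤ i → i ≤ K →
      (∑ j : Fin K, if K - i ≤ (j : ℕ) then etap j else 0)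
        ≤ ∑ j : Fin K, if K - i ≤ (j : ℕ) then thp j else 0) ∧
    (∀ i : ℕ, 1 ≤ i → i ≤ M →
      (∑ j : Fin M, if (j : ℕ) < i then lam j + th j.castSucc else 0)
        ≤ ∑ j : Fin M, if (j : ℕ) < i then xi j + eta j.castSucc else 0) ∧
    (∀ i : Fin (M + 1),
      (∑ j : Fin M, if (j : ℕ) < (i : ℕ) then lam j + th j.castSucc else 0) + th i
        ≤ (∑ j : Fin M, if (j : ℕ) < (i : ℕ) then xi j + eta j.castSucc else 0) + eta i) ∧
    (∃ n : Fin (2 * M + K) → ℕ,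
      ((lam, fullSeq M K th thp) - (xi, fullSeq M K eta etap)
          : (Fin M → ℤ) × (Fin (M + 1 + K) → ℤ))
        = ∑ i, (n i : ℤ) • sroot M K i) := by
  obtain ⟨u1, g, u2, C, hu1, ⟨g', hg, hg', hgg, -⟩, hu2, ⟨Ci, hC, hCi, hCCi, hCiC⟩, hB1⟩ := h1
  obtain ⟨v, C', hv, ⟨Ci', hC', hCi', hCCi', hCiC'⟩, hB2⟩ := h2
  rw [hB1] at hB2
  have mulO : ∀ X Y : Matrix (Fin (M + 1 + K)) (Fin (M + 1 + K)) F, (∀ i j, X i j ∈ Oint) →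
      (∀ i j, Y i j ∈ Oint) → ∀ i j, (X * Y) i j ∈ OO := by
    intro X Y hX hY i j
    rw [Matrix.mul_apply]
    exact OO.sum_mem fun x _ => OO.mul_mem (hX _ _) (hY _ _)
  have eq1 : embTop M (M + 1 + K) u1 * tdiag (xiExt M K xi) *
              embTop M (M + 1 + K) g * u2 * LmatN M K lam th thp =
        Dmat M K * v * tdiag (fullSeq M K eta etap) * (C' * Ci) := by
    rw [← Matrix.mul_assoc, ← hB2, Matrix.mul_assoc _ C, hCCi, Matrix.mul_one]
  have eq2 : embTop M (M + 1 + K) u1 * tdiag (xiExt M K xi) *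
              embTop M (M + 1 + K) g * u2 * LmatN M K lam th thp * (C * Ci') =
        Dmat M K * v * tdiag (fullSeq M K eta etap) := by
    rw [← Matrix.mul_assoc, hB2, Matrix.mul_assoc _ C', hCCi', Matrix.mul_one]
  have c1 := core1 M K lam xi th eta thp etap u1 g u2 (C' * Ci) v hu2 hv (mulO _ _ hC' hCi) eq1
  have c2 := core2 M K lam xi th eta thp etap u1 g u2 (C * Ci') v hlam hth hu1 hg hu2 hv
    (mulO _ _ hC hCi') eq2
  have c3 := core3 M K lam xi th eta thp etap u1 g u2 (C * Ci') v hu1 hu2 hv g' (C' * Ci) hg hg'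
    hgg (mulO _ _ hC hCi') (mulO _ _ hC' hCi)
    (by rw [Matrix.mul_assoc, ← Matrix.mul_assoc Ci', hCiC', Matrix.one_mul, hCCi]) eq2
  have hsumM : ∀ (l : Fin M → ℤ) (t : Fin (M + 1) → ℤ) (tp : Fin K → ℤ) (i : ℕ), i ≤ M →
      (∑ j : Fin M, if (j : ℕ) < i then l j + t j.castSucc else 0)
        = ∑ j ∈ Finset.range i, ext0 l j + ∑ j ∈ Finset.range i, ext0 (fullSeq M K t tp) j := by
    intro l t tp i hi
    rw [← Finset.sum_add_distrib, ← sum_fin_ite _ M i hi]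
    refine Finset.sum_congr rfl fun j _ => ?_
    rw [ext0_fin, ext0_full _ _ _ _ _ (by omega)]
    rfl
  refine ⟨?_, ?_, ?_, ?_⟩
  · intro i hi hiK
    have hz : ∀ (t : Fin (M + 1) → ℤ) (tp : Fin K → ℤ) (j : Fin K),
        ext0 (fullSeq M K t tp) (M + 1 + j) = tp j := by
      intro t tp j
      rw [ext0_lt _ _ (by omega), fullSeq, dif_neg (by simp; omega)]
      congr 1
      ext
      simp
    rw [sum_fin_tail _ K i (M + 1) hiK etap (hz eta etap),
      sum_fin_tail _ K i (M + 1) hiK thp (hz th thp)]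
    exact c1 _ (by omega) (by omega)
  · intro i hi hiM
    rw [hsumM lam th thp i hiM, hsumM xi eta etap i hiM]
    exact c2 i i (Or.inl rfl) hiM (by omega)
  · intro i
    have := c2 i (i + 1) (Or.inr rfl) (by omega) (by omega)
    rw [Finset.sum_range_succ, Finset.sum_range_succ, ext0_full _ _ _ _ _ i.2,
      ext0_full _ _ _ _ _ i.2] at this
    rw [hsumM lam th thp i (by omega), hsumM xi eta etap i (by omega)]
    simpa [add_assoc] using this
  · let x : ℕ → ℤ := fun j => ext0 xi j - ext0 lam j
    let y : ℕ → ℤ := fun j => ext0 (fullSeq M K eta etap) j - ext0 (fullSeq M K th thp) j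
    have hx : ∀ s, ∑ j ∈ Finset.range s, x j
        = ∑ j ∈ Finset.range s, ext0 xi j - ∑ j ∈ Finset.range s, ext0 lam j :=
      fun s => Finset.sum_sub_distrib _ _
    have hy : ∀ s, ∑ j ∈ Finset.range s, y j
        = ∑ j ∈ Finset.range s, ext0 (fullSeq M K eta etap) j
          - ∑ j ∈ Finset.range s, ext0 (fullSeq M K th thp) j :=
      fun s => Finset.sum_sub_distrib _ _
    have hend : coefA M x y (2 * M + K) = 0 := by
      unfold coefA
      rw [show min ((2 * M + K + 1) / 2) M = M by omega, if_neg (by omega),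
        show 2 * M + K - M + 1 = M + 1 + K by omega, hx, hy]
      linarith
    have hnn : ∀ p, p < 2 * M + K → 0 ≤ coefA M x y p := by
      intro p hp
      unfold coefA
      rw [hx, hy]
      by_cases h : p < 2 * M
      · rw [if_pos h]
        have := c2 (min ((p + 1) / 2) M) (p / 2 + 1) (by omega) (by omega) (by omega)
        linarith
      · rw [if_neg h, show min ((p + 1) / 2) M = M by omega]
        have := c1 (p - M + 1) (by omega) (by omega)
        have s1 := Finset.sum_range_add_sum_Ico (ext0 (fullSeq M K eta etap))
          (show p - M + 1 ≤ M + 1 + K by omega)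
        have s2 := Finset.sum_range_add_sum_Ico (ext0 (fullSeq M K th thp))
          (show p - M + 1 ≤ M + 1 + K by omega)
        linarith
    refine ⟨fun p => (coefA M x y p).toNat, ?_⟩
    have hto : ∀ p : Fin (2 * M + K), (((coefA M x y p).toNat : ℕ) : ℤ) = coefA M x y p :=
      fun p => Int.toNat_of_nonneg (hnn p p.2)
    simp only [hto]
    refine Prod.ext ?_ ?_
    · funext k
      rw [Prod.fst_sum, Finset.sum_apply]
      simp only [Prod.smul_fst, Pi.smul_apply, smul_eq_mul, sroot_fst]
      rw [tele _ _ hend _ (by omega), if_neg (by omega), Nat.add_sub_cancel, coefA_odd _ _ _ _ k.2]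
      simp [x, ext0_fin]
    · funext q
      rw [Prod.snd_sum, Finset.sum_apply]
      simp only [Prod.smul_snd, Pi.smul_apply, smul_eq_mul, sroot_snd]
      rw [tele _ _ hend _ (by unfold pos; split_ifs <;> omega), coefA_pos]
      simp [y, ext0_fin]
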